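/- For every odd natural number n ≥ 5, the Orchard crossing number of the wheel graph W_{n,1} equals n(n² − 4n + 11)/8. -/

import Mathlib

set_option linter.unusedSectionVars false

/-!
Common definitions for the Orchard crossing number
(Feder–Garber, "The Orchard crossing number of an abstract graph").
-/

noncomputable section

/-- Points of the plane. -/
abbrev Pt : Type := ℝ × ℝ

/-- The line through two points of the plane. -/
def lineThrough (p q : Pt) : Set Pt := (affineSpan ℝ ({p, q} : Set Pt) : Set Pt)

/-- A line (or any set) `L` separates the points `P` and `Q` if both lie off `L`
and they lie in different connected components of the complement of `L`. -/
def Separates (L : Set Pt) (P Q : Pt) : Prop :=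
  P ∉ L ∧ Q ∉ L ∧ connectedComponentIn Lᶜ P ≠ connectedComponentIn Lᶜ Q

theorem Separates.symm {L : Set Pt} {P Q : Pt} (h : Separates L P Q) : Separates L Q P :=
  ⟨h.2.1, h.1, h.2.2.symm⟩

/-- A generic configuration: a finite set of points, no three of which are collinear. -/
def GenericConfig (S : Set Pt) : Prop :=
  S.Finite ∧ ∀ p ∈ S, ∀ q ∈ S, ∀ r ∈ S, p ≠ q → p ≠ r → q ≠ r →
    ¬ Collinear ℝ ({p, q, r} : Set Pt)

/-- A finite set of points is in convex position if every point of it is an extreme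
point of its convex hull, i.e. lies outside the convex hull of the other points. -/
def ConvexPosition (S : Set Pt) : Prop :=
  ∀ p ∈ S, p ∉ convexHull ℝ (S \ {p})

variable {V : Type*} [Fintype V] [DecidableEq V]

/-- A rectilinear drawing of a graph on vertex set `V`: an injective placement of the
vertices in the plane whose image is a generic configuration. -/
def IsRectDrawing (f : V → Pt) : Prop :=
  Function.Injective f ∧ GenericConfig (Set.range f)

/-- `sepCount f s t` is `n(s,t)`: the number of (unordered) pairs of vertices, both
different from `s` and `t`, whose drawn points span a line separating `f s` from `f t`. -/
def sepCount (f : V → Pt) (s t : V) : ℕ :=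
  Set.ncard {e : Finset V | ∃ a b : V, e = {a, b} ∧ a ≠ b ∧ s ∉ e ∧ t ∉ e ∧
    Separates (lineThrough (f a) (f b)) (f s) (f t)}

theorem sepCount_symm (f : V → Pt) (s t : V) : sepCount f s t = sepCount f t s := by
  unfold sepCount
  congr 1
  ext e
  constructor
  · rintro ⟨a, b, rfl, hab, hs, ht, hsep⟩
    exact ⟨a, b, rfl, hab, ht, hs, hsep.symm⟩
  · rintro ⟨a, b, rfl, hab, ht, hs, hsep⟩
    exact ⟨a, b, rfl, hab, hs, ht, hsep.symm⟩

/-- The crossing number `n(R(G))` of a drawing: the sum of `n(s,t)` over all edges. -/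
def drawingCrossings (G : SimpleGraph V) (f : V → Pt) : ℕ :=
  ∑ e ∈ G.edgeSet.toFinite.toFinset,
    Sym2.lift ⟨fun s t => sepCount f s t, fun s t => sepCount_symm f s t⟩ e

/-- The Orchard crossing number: the minimum of `n(R(G))` over all rectilinear drawings. -/
def OCN (G : SimpleGraph V) : ℕ :=
  sInf {n | ∃ f : V → Pt, IsRectDrawing f ∧ drawingCrossings G f = n}

/-- The maximal Orchard crossing number: the maximum of `n(R(G))` over all drawings. -/
def MOCN (G : SimpleGraph V) : ℕ :=
  sSup {n | ∃ f : V → Pt, IsRectDrawing f ∧ drawingCrossings G f = n}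

/-- The open segment drawn for an edge. -/
def edgeSeg (f : V → Pt) (e : Sym2 V) : Set Pt :=
  Sym2.lift ⟨fun a b => openSegment ℝ (f a) (f b), fun a b => openSegment_symm ℝ (f a) (f b)⟩ e

/-- The number of unordered pairs of distinct edges of `G` whose drawn open segments
intersect. -/
def crossPairs (G : SimpleGraph V) (f : V → Pt) : ℕ :=
  Set.ncard {p : Finset (Sym2 V) | ∃ e₁ e₂ : Sym2 V, p = {e₁, e₂} ∧ e₁ ≠ e₂ ∧
    e₁ ∈ G.edgeSet ∧ e₂ ∈ G.edgeSet ∧ (edgeSeg f e₁ ∩ edgeSeg f e₂).Nonempty}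

/-- The rectilinear crossing number: the minimum number of crossing pairs of edges
over all rectilinear drawings. -/
def rcr (G : SimpleGraph V) : ℕ :=
  sInf {n | ∃ f : V → Pt, IsRectDrawing f ∧ crossPairs G f = n}

/-- The number of 4-element subsets of the drawn points which are in convex position. -/
def convexFour (f : V → Pt) : ℕ :=
  Set.ncard {Q : Finset Pt | Q.card = 4 ∧ (Q : Set Pt) ⊆ Set.range f ∧
    ConvexPosition (Q : Set Pt)}

/-- The cyclic successor on `Fin n`. -/
def nextFin {n : ℕ} (i : Fin n) : Fin n :=
  ⟨(i.val + 1) % n, Nat.mod_lt _ (Nat.zero_lt_of_lt i.isLt)⟩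

/-- The star graph `K_{n,1}` on `n+1` vertices: the center `0` is joined to each of
the `n` outer vertices. -/
def starGraph (n : ℕ) : SimpleGraph (Fin (n + 1)) :=
  SimpleGraph.fromEdgeSet {e | ∃ i : Fin n, e = s((0 : Fin (n + 1)), i.succ)}

/-- The wheel graph `W_{n,1}` on `n+1` vertices: a cycle on the `n` outer vertices
together with a hub `0` joined to each of them. -/
def wheelGraph (n : ℕ) : SimpleGraph (Fin (n + 1)) :=
  SimpleGraph.fromEdgeSet
    ({e | ∃ i : Fin n, e = s((0 : Fin (n + 1)), i.succ)} ∪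
     {e | ∃ i : Fin n, e = s(i.succ, (nextFin i).succ)})

/-- The cycle graph `C_n` on the outer vertices `1, …, n` of `Fin (n+1)`, together
with the isolated vertex `0`. -/
def cycleWithIsolated (n : ℕ) : SimpleGraph (Fin (n + 1)) :=
  SimpleGraph.fromEdgeSet {e | ∃ i : Fin n, e = s(i.succ, (nextFin i).succ)}

/-- `HullCycle f` says that for every `i`, all the other drawn points lie (strictly) on
one side of the line through `f i` and `f (i+1)`; for an injective generic placement this
means the points are in convex position and occur around the convex hull exactly in the
cyclic order `f 0, f 1, …`. -/
def HullCycle {m : ℕ} (f : Fin m → Pt) : Prop :=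
  ∀ i j l : Fin m, j ≠ i → j ≠ nextFin i → l ≠ i → l ≠ nextFin i →
    ¬ Separates (lineThrough (f i) (f (nextFin i))) (f j) (f l)

end

/-- Twice the signed area of the triangle `p q r`. -/
def orient (p q r : Pt) : ℝ :=
  (q.1 - p.1) * (r.2 - p.2) - (q.2 - p.2) * (r.1 - p.1)

theorem orient_rotate (p q r : Pt) : orient q r p = orient p q r := by
  unfold orient; ring

theorem orient_swap (p q r : Pt) : orient q p r = -orient p q r := by
  unfold orient; ring

theorem orient_swap_right (p q r : Pt) : orient p r q = -orient p q r := by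
  unfold orient; ring

theorem orient_self_left (p q : Pt) : orient p p q = 0 := by
  unfold orient; ring

theorem orient_self_right (p q : Pt) : orient p q q = 0 := by
  unfold orient; ring

theorem orient_self_outer (p q : Pt) : orient p q p = 0 := by
  unfold orient; ring

theorem orient_eq_add (o p q r : Pt) :
    orient p q r = orient o p q + orient o q r + orient o r p := by
  unfold orient; ring

theorem mem_lineThrough_iff {p q : Pt} (hpq : p ≠ q) (r : Pt) :
    r ∈ lineThrough p q ↔ orient p q r = 0 := by
  unfold lineThrough orient
  rw [SetLike.mem_coe, mem_affineSpan_pair_iff_exists_lineMap_eq]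
  constructor
  · rintro ⟨t, rfl⟩
    simp [AffineMap.lineMap_apply]
    ring
  · intro h
    by_cases h1 : q.1 - p.1 = 0
    · have h2 : q.2 - p.2 ≠ 0 := fun h2 => hpq (Prod.ext (by linarith) (by linarith))
      refine ⟨(r.2 - p.2) / (q.2 - p.2), ?_⟩
      have h3 : r.1 - p.1 = 0 := by
        rw [h1] at h
        have : (q.2 - p.2) * (r.1 - p.1) = 0 := by linarith
        exact (mul_eq_zero.mp this).resolve_left h2
      ext
      · simp [AffineMap.lineMap_apply, h1]; linarith
      · simp [AffineMap.lineMap_apply, h2]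
    · refine ⟨(r.1 - p.1) / (q.1 - p.1), ?_⟩
      ext
      · simp [AffineMap.lineMap_apply, h1]
      · simp [AffineMap.lineMap_apply]
        field_simp
        linarith

theorem collinear_iff_orient_eq_zero {p q : Pt} (hpq : p ≠ q) (r : Pt) :
    Collinear ℝ ({p, q, r} : Set Pt) ↔ orient p q r = 0 := by
  rw [← mem_lineThrough_iff hpq]
  constructor
  · intro h
    exact h.mem_affineSpan_of_mem_of_ne (by simp) (by simp) (by simp) hpq
  · intro h
    have := collinear_insert_of_mem_affineSpan_pair h
    convert this using 1
    ext x; simp; tauto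

theorem continuous_orient (p q : Pt) : Continuous (orient p q) := by
  unfold orient; fun_prop

theorem orient_pos_of_mem_segment {p q P Q x : Pt} (ε : ℝ) (hP : 0 < ε * orient p q P)
    (hQ : 0 < ε * orient p q Q) (hx : x ∈ segment ℝ P Q) : 0 < ε * orient p q x := by
  obtain ⟨a, b, ha, hb, hab, rfl⟩ := hx
  have : ε * orient p q (a • P + b • Q) = a * (ε * orient p q P) + b * (ε * orient p q Q) := by
    obtain rfl : a = 1 - b := by linarith
    simp [orient]; ring
  rw [this]
  rcases ha.eq_or_lt with rfl | ha
  · obtain rfl : b = 1 := by linarith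
    simpa using hQ
  · have := mul_pos ha hP
    have := mul_nonneg hb hQ.le
    linarith

theorem separates_iff {p q : Pt} (hpq : p ≠ q) (P Q : Pt) :
    Separates (lineThrough p q) P Q ↔ orient p q P * orient p q Q < 0 := by
  unfold Separates
  rw [mem_lineThrough_iff hpq, mem_lineThrough_iff hpq]
  constructor
  · rintro ⟨hP, hQ, hne⟩
    by_contra! hnn
    have hpos : 0 < orient p q P * orient p q Q :=
      lt_of_le_of_ne hnn (mul_ne_zero hP hQ).symm
    apply hne
    apply connectedComponentIn_eq
    have hsub : segment ℝ P Q ⊆ (lineThrough p q)ᶜ := by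
      intro x hx
      rw [Set.mem_compl_iff, mem_lineThrough_iff hpq]
      have := orient_pos_of_mem_segment (orient p q P) (mul_self_pos.mpr hP) hpos hx
      exact right_ne_zero_of_mul this.ne'
    exact (convex_segment P Q).isPreconnected.subset_connectedComponentIn
      (left_mem_segment ℝ P Q) hsub (right_mem_segment ℝ P Q)
  · intro h
    have hP : orient p q P ≠ 0 := left_ne_zero_of_mul h.ne
    have hQ : orient p q Q ≠ 0 := right_ne_zero_of_mul h.ne
    refine ⟨hP, hQ, fun heq => ?_⟩
    have hPm : P ∈ connectedComponentIn (lineThrough p q)ᶜ P :=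
      mem_connectedComponentIn (by rwa [Set.mem_compl_iff, mem_lineThrough_iff hpq])
    have hQm : Q ∈ connectedComponentIn (lineThrough p q)ᶜ P := by
      rw [heq]
      exact mem_connectedComponentIn (by rwa [Set.mem_compl_iff, mem_lineThrough_iff hpq])
    have hconn := (isPreconnected_connectedComponentIn
      (F := (lineThrough p q)ᶜ) (x := P)).image _ (continuous_orient p q).continuousOn
    have hord := hconn.ordConnected.uIcc_subset (Set.mem_image_of_mem _ hPm)
      (Set.mem_image_of_mem _ hQm)
    have h0 : (0 : ℝ) ∈ Set.uIcc (orient p q P) (orient p q Q) := by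
      rw [Set.mem_uIcc]
      rcases mul_neg_iff.mp h with h | h
      · exact Or.inr ⟨h.2.le, h.1.le⟩
      · exact Or.inl ⟨h.1.le, h.2.le⟩
    obtain ⟨x, hx, hx0⟩ := hord h0
    exact connectedComponentIn_subset _ _ hx ((mem_lineThrough_iff hpq x).mpr hx0)

theorem IsRectDrawing.orient_ne_zero {V : Type*} {f : V → Pt} (hf : IsRectDrawing f)
    {a b c : V} (hab : a ≠ b) (hac : a ≠ c) (hbc : b ≠ c) : orient (f a) (f b) (f c) ≠ 0 := by
  rw [Ne, ← collinear_iff_orient_eq_zero (hf.1.ne hab)]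
  exact hf.2.2 _ ⟨a, rfl⟩ _ ⟨b, rfl⟩ _ ⟨c, rfl⟩ (hf.1.ne hab) (hf.1.ne hac) (hf.1.ne hbc)

theorem isRectDrawing_of_orient_ne_zero {V : Type*} [Fintype V] {f : V → Pt}
    (hV : 2 < Fintype.card V)
    (h : ∀ a b c : V, a ≠ b → a ≠ c → b ≠ c → orient (f a) (f b) (f c) ≠ 0) :
    IsRectDrawing f := by
  classical
  have hinj : Function.Injective f := by
    intro a b hab
    by_contra hne
    obtain ⟨c, hc⟩ : ∃ c, c ∉ ({a, b} : Finset V) := by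
      by_contra! hall
      have := Finset.card_le_card (fun x _ => hall x : (Finset.univ : Finset V) ⊆ {a, b})
      have := Finset.card_le_two (a := a) (b := b)
      rw [Finset.card_univ] at *
      omega
    simp only [Finset.mem_insert, Finset.mem_singleton, not_or] at hc
    apply h a b c hne (Ne.symm hc.1) (Ne.symm hc.2)
    rw [hab, orient_self_left]
  refine ⟨hinj, Set.finite_range f, ?_⟩
  rintro _ ⟨a, rfl⟩ _ ⟨b, rfl⟩ _ ⟨c, rfl⟩ hab hac hbc
  rw [collinear_iff_orient_eq_zero hab]
  exact h a b c (fun h => hab (h ▸ rfl)) (fun h => hac (h ▸ rfl)) (fun h => hbc (h ▸ rfl))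

theorem two_mul_sepCount {V : Type*} [Fintype V] [DecidableEq V] {f : V → Pt}
    (hf : Function.Injective f) (s t : V) :
    2 * sepCount f s t = ∑ a, ∑ b,
      if orient (f a) (f b) (f s) * orient (f a) (f b) (f t) < 0 then 1 else 0 := by
  classical
  set P : Finset (V × V) := Finset.univ.filter fun x =>
    orient (f x.1) (f x.2) (f s) * orient (f x.1) (f x.2) (f t) < 0 with hP
  have hdist : ∀ x ∈ P, x.1 ≠ x.2 ∧ s ≠ x.1 ∧ s ≠ x.2 ∧ t ≠ x.1 ∧ t ≠ x.2 := by
    rintro ⟨a, b⟩ hx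
    simp only [hP, Finset.mem_filter, Finset.mem_univ, true_and] at hx
    refine ⟨?_, ?_, ?_, ?_, ?_⟩ <;> intro h <;> dsimp only at h <;> subst h <;>
      simp [orient_self_left, orient_self_right, orient_self_outer] at hx
  have hset : {e : Finset V | ∃ a b : V, e = {a, b} ∧ a ≠ b ∧ s ∉ e ∧ t ∉ e ∧
      Separates (lineThrough (f a) (f b)) (f s) (f t)} =
      (P.image fun x => ({x.1, x.2} : Finset V) : Finset (Finset V)) := by
    ext e
    simp only [Set.mem_ofPred_eq, Finset.coe_image, Set.mem_image, Finset.mem_coe]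
    constructor
    · rintro ⟨a, b, rfl, hab, -, -, hsep⟩
      refine ⟨(a, b), ?_, rfl⟩
      simpa [hP] using (separates_iff (hf.ne hab) _ _).mp hsep
    · rintro ⟨⟨a, b⟩, hx, rfl⟩
      obtain ⟨h1, h2, h3, h4, h5⟩ := hdist _ hx
      refine ⟨a, b, rfl, h1, by simp_all, by simp_all, ?_⟩
      rw [separates_iff (hf.ne h1)]
      simpa [hP] using hx
  have hfib : ∀ e ∈ P.image fun x => ({x.1, x.2} : Finset V),
      (P.filter fun x => ({x.1, x.2} : Finset V) = e).card = 2 := by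
    intro e he
    obtain ⟨⟨a, b⟩, hx, rfl⟩ := Finset.mem_image.mp he
    have h1 : a ≠ b := (hdist _ hx).1
    have hx' : (b, a) ∈ P := by
      simp only [hP, Finset.mem_filter, Finset.mem_univ, true_and] at hx ⊢
      rw [orient_swap (f a), orient_swap (f a)]
      linarith
    have : (P.filter fun x => ({x.1, x.2} : Finset V) = {a, b}) = {(a, b), (b, a)} := by
      ext ⟨c, d⟩
      simp only [Finset.mem_filter, Finset.mem_insert, Finset.mem_singleton, Prod.mk.injEq]
      constructor
      · rintro ⟨-, h⟩
        have := congrArg (fun s : Finset V => (s : Set V)) h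
        simpa [Set.pair_eq_pair_iff] using this
      · rintro (⟨rfl, rfl⟩ | ⟨rfl, rfl⟩)
        · exact ⟨hx, rfl⟩
        · exact ⟨hx', Finset.pair_comm _ _⟩
    rw [this, Finset.card_pair (by simp [h1])]
  have hcard := Finset.card_eq_sum_card_image (fun x : V × V => ({x.1, x.2} : Finset V)) P
  rw [Finset.sum_congr rfl hfib, Finset.sum_const, smul_eq_mul] at hcard
  rw [sepCount, hset, Set.ncard_coe_finset, mul_comm, ← hcard, hP, Finset.card_filter,
    Fintype.sum_prod_type]

theorem nextFin_val {n : ℕ} (i : Fin n) :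
    (i.val + 1 < n ∧ (nextFin i).val = i.val + 1) ∨ (i.val + 1 = n ∧ (nextFin i).val = 0) := by
  rcases Nat.lt_or_ge (i.val + 1) n with h | h
  · exact Or.inl ⟨h, Nat.mod_eq_of_lt h⟩
  · have h' : i.val + 1 = n := by omega
    exact Or.inr ⟨h', by simp [nextFin, h']⟩

theorem drawingCrossings_wheelGraph {n : ℕ} (hn : 3 ≤ n) (f : Fin (n + 1) → Pt) :
    drawingCrossings (wheelGraph n) f =
      ∑ i : Fin n, sepCount f 0 i.succ + ∑ i : Fin n, sepCount f i.succ (nextFin i).succ := by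
  classical
  have hset : (wheelGraph n).edgeSet.toFinite.toFinset =
      (Finset.univ.image fun i : Fin n => s((0 : Fin (n + 1)), i.succ)) ∪
      (Finset.univ.image fun i : Fin n => s(i.succ, (nextFin i).succ)) := by
    ext e
    simp only [wheelGraph, SimpleGraph.edgeSet_fromEdgeSet, Set.Finite.mem_toFinset,
      Set.mem_sdiff, Set.mem_union, Set.mem_ofPred_eq, Finset.mem_union, Finset.mem_image,
      Finset.mem_univ, true_and]
    constructor
    · rintro ⟨⟨i, rfl⟩ | ⟨i, rfl⟩, -⟩
      · exact Or.inl ⟨i, rfl⟩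
      · exact Or.inr ⟨i, rfl⟩
    · rintro (⟨i, rfl⟩ | ⟨i, rfl⟩)
      · exact ⟨Or.inl ⟨i, rfl⟩, by simp [Fin.ext_iff]⟩
      · refine ⟨Or.inr ⟨i, rfl⟩, ?_⟩
        have := nextFin_val i
        simp [Fin.ext_iff]
        omega
  rw [drawingCrossings, hset, Finset.sum_union, Finset.sum_image, Finset.sum_image]
  · simp
  · intro i _ j _ h
    have hi := nextFin_val i
    have hj := nextFin_val j
    simp only [Sym2.eq_iff, Fin.ext_iff, Fin.val_succ] at h
    apply Fin.ext
    omega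
  · intro i _ j _ h
    simpa [Fin.ext_iff] using h
  · rw [Finset.disjoint_left]
    intro e he he'
    simp only [Finset.mem_image, Finset.mem_univ, true_and] at he he'
    obtain ⟨i, rfl⟩ := he
    obtain ⟨j, hj⟩ := he'
    simp [Fin.ext_iff] at hj

/-- Twice the crossing number of a drawing of the wheel, as a count over ordered pairs. -/
theorem two_mul_drawingCrossings_wheelGraph {n : ℕ} (hn : 3 ≤ n) {f : Fin (n + 1) → Pt}
    (hf : Function.Injective f) :
    2 * drawingCrossings (wheelGraph n) f =
      (∑ i : Fin n, ∑ a : Fin n, ∑ b : Fin n,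
        if orient (f 0) (f a.succ) (f b.succ) * orient (f a.succ) (f b.succ) (f i.succ) < 0
        then 1 else 0) +
      (∑ i : Fin n, ∑ a : Fin n, ∑ b : Fin n,
        if orient (f a.succ) (f b.succ) (f i.succ) *
          orient (f a.succ) (f b.succ) (f (nextFin i).succ) < 0 then 1 else 0) +
      2 * ∑ a : Fin n, ∑ i : Fin n,
        if orient (f 0) (f a.succ) (f i.succ) *
          orient (f 0) (f a.succ) (f (nextFin i).succ) < 0 then 1 else 0 := by
  rw [drawingCrossings_wheelGraph hn, mul_add, Finset.mul_sum, Finset.mul_sum, add_assoc]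
  congr 1
  · refine Finset.sum_congr rfl fun i _ => ?_
    rw [two_mul_sepCount hf]
    simp only [Fin.sum_univ_succ (n := n), orient_self_outer, zero_mul,
      lt_irrefl, if_false, Finset.sum_const_zero, zero_add, orient_self_right]
    simp only [orient_rotate (f 0)]
  · rw [Finset.sum_comm (γ := Fin n) (f := fun a i => if orient (f 0) (f a.succ) (f i.succ) *
          orient (f 0) (f a.succ) (f (nextFin i).succ) < 0 then 1 else 0), Finset.mul_sum,
      ← Finset.sum_add_distrib]
    refine Finset.sum_congr rfl fun i _ => ?_
    rw [two_mul_sepCount hf]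
    simp only [Fin.sum_univ_succ (n := n), orient_self_left, zero_mul,
      lt_irrefl, if_false, zero_add, Finset.sum_add_distrib]
    have : ∀ a : Fin n, orient (f a.succ) (f 0) (f i.succ) *
        orient (f a.succ) (f 0) (f (nextFin i).succ) = orient (f 0) (f a.succ) (f i.succ) *
        orient (f 0) (f a.succ) (f (nextFin i).succ) := fun a => by
      rw [orient_swap (f 0), orient_swap (f 0), neg_mul_neg]
    simp only [this]
    ring

theorem sum_three_cyclic {ι : Type*} [Fintype ι] (F : ι → ι → ι → ℕ) :
    ∑ i, ∑ a, ∑ b, (F i a b + F a b i + F b i a) = 3 * ∑ i, ∑ a, ∑ b, F i a b := by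
  simp only [Finset.sum_add_distrib]
  have h1 : ∑ i, ∑ a, ∑ b, F a b i = ∑ i, ∑ a, ∑ b, F i a b :=
    Finset.sum_comm.trans (Finset.sum_congr rfl fun a _ => Finset.sum_comm)
  have h2 : ∑ i, ∑ a, ∑ b, F b i a = ∑ i, ∑ a, ∑ b, F i a b :=
    (Finset.sum_congr rfl fun i _ => Finset.sum_comm).trans Finset.sum_comm
  rw [h1, h2]; ring

theorem sum_ite_source {ι : Type*} [Fintype ι] [DecidableEq ι] (D : ι → ι → ℝ) :
    (∑ a, ∑ b, ∑ c, if b ≠ c ∧ 0 < D a b ∧ 0 < D a c then 1 else 0) =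
      ∑ a, (Finset.univ.filter fun b => 0 < D a b).card *
        ((Finset.univ.filter fun b => 0 < D a b).card - 1) := by
  refine Finset.sum_congr rfl fun a _ => ?_
  have : (Finset.univ.filter fun b => 0 < D a b).offDiag =
      Finset.univ.filter fun x : ι × ι => x.1 ≠ x.2 ∧ 0 < D a x.1 ∧ 0 < D a x.2 := by
    ext x; simp; tauto
  rw [Nat.mul_sub, mul_one, ← Finset.offDiag_card, this, Finset.card_filter,
    Fintype.sum_prod_type]

theorem source_le_separated {x y z : ℝ} (hx : x ≠ 0) (hy : y ≠ 0) (hz : z ≠ 0)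
    (hT : x + y + z ≠ 0) :
    ((if 0 < x ∧ z < 0 then 1 else 0) + (if 0 < y ∧ x < 0 then 1 else 0) +
      (if 0 < z ∧ y < 0 then 1 else 0) : ℕ) ≤
    (if x * (x + y + z) < 0 then 1 else 0) + (if y * (x + y + z) < 0 then 1 else 0) +
      (if z * (x + y + z) < 0 then 1 else 0) := by
  simp only [mul_neg_iff]
  rcases lt_or_gt_of_ne hx with hx | hx <;> rcases lt_or_gt_of_ne hy with hy | hy <;>
    rcases lt_or_gt_of_ne hz with hz | hz <;> rcases lt_or_gt_of_ne hT with hT | hT <;>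
    simp [hx, hy, hz, hT, hx.not_gt, hy.not_gt, hz.not_gt, hT.not_gt]

theorem separated_le_source {x y z : ℝ} (hx : x ≠ 0) (hy : y ≠ 0) (hz : z ≠ 0)
    (hxy : ¬ (x * (x + y + z) < 0 ∧ y * (x + y + z) < 0))
    (hyz : ¬ (y * (x + y + z) < 0 ∧ z * (x + y + z) < 0))
    (hzx : ¬ (z * (x + y + z) < 0 ∧ x * (x + y + z) < 0)) :
    ((if x * (x + y + z) < 0 then 1 else 0) + (if y * (x + y + z) < 0 then 1 else 0) +
      (if z * (x + y + z) < 0 then 1 else 0) : ℕ) ≤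
    (if 0 < x ∧ z < 0 then 1 else 0) + (if 0 < y ∧ x < 0 then 1 else 0) +
      (if 0 < z ∧ y < 0 then 1 else 0) := by
  rcases eq_or_ne (x + y + z) 0 with hT | hT
  · simp [hT]
  simp only [mul_neg_iff] at *
  rcases lt_or_gt_of_ne hx with hx | hx <;> rcases lt_or_gt_of_ne hy with hy | hy <;>
    rcases lt_or_gt_of_ne hz with hz | hz <;> rcases lt_or_gt_of_ne hT with hT | hT <;>
    simp_all [hx.not_gt, hy.not_gt, hz.not_gt, hT.not_gt]

section Star

variable {n : ℕ} (f : Fin (n + 1) → Pt)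

/-- The number of rim vertices to the left of the directed line from the hub to `a`. -/
noncomputable def leftCount (a : Fin n) : ℕ :=
  (Finset.univ.filter fun b : Fin n => 0 < orient (f 0) (f a.succ) (f b.succ)).card

/-- Twice the contribution of the spokes to the crossing number of a drawing of the wheel. -/
noncomputable def starSum : ℕ :=
  ∑ i : Fin n, ∑ a : Fin n, ∑ b : Fin n,
    if orient (f 0) (f a.succ) (f b.succ) * orient (f a.succ) (f b.succ) (f i.succ) < 0
    then 1 else 0

theorem three_mul_starSum : 3 * starSum f = ∑ i : Fin n, ∑ a : Fin n, ∑ b : Fin n,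
    ((if orient (f 0) (f a.succ) (f b.succ) *
        (orient (f 0) (f a.succ) (f b.succ) + orient (f 0) (f b.succ) (f i.succ) +
          orient (f 0) (f i.succ) (f a.succ)) < 0 then 1 else 0) +
      (if orient (f 0) (f b.succ) (f i.succ) *
        (orient (f 0) (f a.succ) (f b.succ) + orient (f 0) (f b.succ) (f i.succ) +
          orient (f 0) (f i.succ) (f a.succ)) < 0 then 1 else 0) +
      (if orient (f 0) (f i.succ) (f a.succ) *
        (orient (f 0) (f a.succ) (f b.succ) + orient (f 0) (f b.succ) (f i.succ) +
          orient (f 0) (f i.succ) (f a.succ)) < 0 then 1 else 0)) := by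
  rw [starSum, ← sum_three_cyclic]
  refine Finset.sum_congr rfl fun i _ => Finset.sum_congr rfl fun a _ =>
    Finset.sum_congr rfl fun b _ => ?_
  rw [← orient_eq_add, orient_rotate (f a.succ) (f b.succ) (f i.succ),
    ← orient_rotate (f i.succ) (f a.succ) (f b.succ)]

theorem three_mul_sum_leftCount :
    3 * ∑ a, leftCount f a * (leftCount f a - 1) = ∑ i : Fin n, ∑ a : Fin n, ∑ b : Fin n,
    ((if b ≠ i ∧ 0 < orient (f 0) (f a.succ) (f b.succ) ∧
        orient (f 0) (f i.succ) (f a.succ) < 0 then 1 else 0) +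
      (if i ≠ a ∧ 0 < orient (f 0) (f b.succ) (f i.succ) ∧
        orient (f 0) (f a.succ) (f b.succ) < 0 then 1 else 0) +
      (if a ≠ b ∧ 0 < orient (f 0) (f i.succ) (f a.succ) ∧
        orient (f 0) (f b.succ) (f i.succ) < 0 then 1 else 0)) := by
  simp only [leftCount]
  rw [← sum_ite_source fun a b : Fin n => orient (f 0) (f a.succ) (f b.succ), ← sum_three_cyclic]
  have hanti : ∀ a b : Fin n, 0 < orient (f 0) (f a.succ) (f b.succ) ↔
      orient (f 0) (f b.succ) (f a.succ) < 0 := fun a b => by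
    rw [orient_swap_right, neg_pos]
  refine Finset.sum_congr rfl fun i _ => Finset.sum_congr rfl fun a _ =>
    Finset.sum_congr rfl fun b _ => ?_
  simp only [← hanti]
  ring

variable {f}

theorem sum_leftCount_le_starSum (hf : IsRectDrawing f) :
    ∑ a, leftCount f a * (leftCount f a - 1) ≤ starSum f := by
  refine Nat.le_of_mul_le_mul_left (c := 3) ?_ (by norm_num)
  rw [three_mul_starSum, three_mul_sum_leftCount]
  refine Finset.sum_le_sum fun i _ => Finset.sum_le_sum fun a _ => Finset.sum_le_sum fun b _ => ?_
  have h0 : ∀ {a b : Fin n}, a ≠ b → orient (f 0) (f a.succ) (f b.succ) ≠ 0 := fun hab =>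
    hf.orient_ne_zero (Fin.succ_ne_zero _).symm (Fin.succ_ne_zero _).symm (by simpa using hab)
  by_cases hia : i = a
  · subst hia; simp [orient_self_right]
  by_cases hib : i = b
  · subst hib; simp [orient_self_right]
  by_cases hab : a = b
  · subst hab; simp [orient_self_right]
  simp only [hia, hab, Ne.symm hib, ne_eq, not_false_eq_true, true_and]
  refine source_le_separated (h0 hab) (h0 (Ne.symm hib)) (h0 hia) ?_
  rw [← orient_eq_add]
  exact hf.orient_ne_zero (by simpa using hab) (by simpa using Ne.symm hia)
    (by simpa using Ne.symm hib)

theorem starSum_le_sum_leftCount (hf : IsRectDrawing f)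
    (h : ∀ a b c : Fin n, ¬ (
      orient (f 0) (f a.succ) (f b.succ) * orient (f a.succ) (f b.succ) (f c.succ) < 0 ∧
      orient (f 0) (f b.succ) (f c.succ) * orient (f a.succ) (f b.succ) (f c.succ) < 0)) :
    starSum f ≤ ∑ a, leftCount f a * (leftCount f a - 1) := by
  refine Nat.le_of_mul_le_mul_left (c := 3) ?_ (by norm_num)
  rw [three_mul_starSum, three_mul_sum_leftCount]
  refine Finset.sum_le_sum fun i _ => Finset.sum_le_sum fun a _ => Finset.sum_le_sum fun b _ => ?_
  have h0 : ∀ {a b : Fin n}, a ≠ b → orient (f 0) (f a.succ) (f b.succ) ≠ 0 := fun hab =>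
    hf.orient_ne_zero (Fin.succ_ne_zero _).symm (Fin.succ_ne_zero _).symm (by simpa using hab)
  by_cases hia : i = a
  · subst hia; simp only [← orient_eq_add]; simp [orient_self_outer]
  by_cases hib : i = b
  · subst hib; simp only [← orient_eq_add]; simp [orient_self_right]
  by_cases hab : a = b
  · subst hab; simp only [← orient_eq_add]; simp [orient_self_left]
  simp only [hia, hab, Ne.symm hib, ne_eq, not_false_eq_true, true_and]
  refine separated_le_source (h0 hab) (h0 (Ne.symm hib)) (h0 hia) ?_ ?_ ?_ <;>
    rw [← orient_eq_add]
  · exact h a b i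
  · rw [← orient_rotate (f a.succ) (f b.succ) (f i.succ)]; exact h b i a
  · rw [orient_rotate (f i.succ) (f a.succ) (f b.succ)]; exact h i a b

theorem leftCount_add_card (hf : IsRectDrawing f) (a : Fin n) : leftCount f a +
    (Finset.univ.filter fun b : Fin n => orient (f 0) (f a.succ) (f b.succ) < 0).card = n - 1 := by
  rw [leftCount, ← Finset.card_union_of_disjoint]
  · have : (Finset.univ.erase a).card = n - 1 := by simp
    rw [← this]
    congr 1
    ext b
    simp only [Finset.mem_union, Finset.mem_filter, Finset.mem_univ, true_and, Finset.mem_erase,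
      and_true]
    constructor
    · rintro h rfl
      simp [orient_self_right] at h
    · intro h
      exact (lt_or_gt_of_ne (hf.orient_ne_zero (Fin.succ_ne_zero _).symm (Fin.succ_ne_zero _).symm
        (by simpa using Ne.symm h))).symm
  · rw [Finset.disjoint_filter]
    exact fun b _ h => h.not_gt

theorem two_mul_sum_leftCount (hf : IsRectDrawing f) :
    2 * ∑ a, leftCount f a = n * (n - 1) := by
  have h1 : ∑ a : Fin n, (Finset.univ.filter fun b : Fin n =>
      orient (f 0) (f a.succ) (f b.succ) < 0).card = ∑ a, leftCount f a := by
    simp only [leftCount, Finset.card_filter]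
    rw [Finset.sum_comm]
    refine Finset.sum_congr rfl fun a _ => Finset.sum_congr rfl fun b _ => ?_
    simp only [orient_swap_right (f 0) (f a.succ), Left.neg_neg_iff]
  calc 2 * ∑ a, leftCount f a
      = ∑ a : Fin n, (leftCount f a + (Finset.univ.filter fun b : Fin n =>
        orient (f 0) (f a.succ) (f b.succ) < 0).card) := by
        rw [Finset.sum_add_distrib, h1, two_mul]
    _ = n * (n - 1) := by simp [leftCount_add_card hf]

end Star

theorem exists_sign_change {n : ℕ} (a : Fin n) (D : Fin n → ℝ) (hD : ∀ i, i ≠ a → D i ≠ 0)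
    (hp : ∃ i, i ≠ a ∧ 0 < D i) (hq : ∃ i, i ≠ a ∧ D i < 0) :
    ∃ i : Fin n, D i * D (nextFin i) < 0 := by
  by_contra! hall
  set idx : ℕ → Fin n := fun k => ⟨(a.val + 1 + k) % n, Nat.mod_lt _ a.pos⟩ with hidx
  have hsucc : ∀ k, idx (k + 1) = nextFin (idx k) := fun k => by
    simp [hidx, nextFin, add_assoc]
  have hne : ∀ k, k + 1 < n → idx k ≠ a := fun k hk h => by
    have h : (a.val + 1 + k) % n = a.val := congrArg Fin.val h
    have := a.isLt
    rcases Nat.lt_or_ge (a.val + 1 + k) n with h1 | h1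
    · rw [Nat.mod_eq_of_lt h1] at h; omega
    · rw [Nat.mod_eq_sub_mod h1, Nat.mod_eq_of_lt (by omega)] at h; omega
  have hsign : ∀ k, k + 1 < n → 0 < D (idx 0) * D (idx k) := fun k => by
    induction k with
    | zero => exact fun hk => mul_self_pos.mpr (hD _ (hne 0 hk))
    | succ k ih =>
      intro hk
      have h1 := ih (by omega)
      have h2 : 0 < D (idx k) * D (idx (k + 1)) :=
        lt_of_le_of_ne (by rw [hsucc]; exact hall _)
          (mul_ne_zero (hD _ (hne k (by omega))) (hD _ (hne (k + 1) hk))).symm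
      have h3 := mul_pos h1 h2
      have h4 : 0 < D (idx k) ^ 2 := by
        have := hD _ (hne k (by omega))
        positivity
      refine pos_of_mul_pos_right (a := D (idx k) ^ 2) ?_ h4.le
      linarith
  have hsurj : ∀ i, i ≠ a → 0 < D (idx 0) * D i := fun i hi => by
    have hia : i.val ≠ a.val := fun h => hi (Fin.ext h)
    have := a.isLt
    have := i.isLt
    rcases lt_or_gt_of_ne hia with h | h
    · convert hsign (i.val + n - a.val - 1) (by omega)
      have : a.val + 1 + (i.val + n - a.val - 1) = i.val + n := by omega
      simp [hidx, this, Nat.mod_eq_of_lt]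
    · convert hsign (i.val - a.val - 1) (by omega)
      have : a.val + 1 + (i.val - a.val - 1) = i.val := by omega
      simp [hidx, this, Nat.mod_eq_of_lt]
  obtain ⟨i, hi, hip⟩ := hp
  obtain ⟨j, hj, hjq⟩ := hq
  have h1 := pos_of_mul_pos_left (hsurj i hi) hip.le
  exact absurd (hsurj j hj) (mul_neg_of_pos_of_neg h1 hjq).not_gt

/-- Lower bound for the crossing number of any drawing of the wheel. -/
theorem le_two_mul_drawingCrossings {n m : ℕ} (hm : 2 ≤ m) (hn : n = 2 * m + 1)
    {f : Fin (n + 1) → Pt} (hf : IsRectDrawing f) :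
    n * (m * (m - 1) + 2) ≤ 2 * drawingCrossings (wheelGraph n) f := by
  have hcycle : ∀ a, (if 0 < leftCount f a ∧ leftCount f a < n - 1 then 1 else 0) ≤
      ∑ i : Fin n, if orient (f 0) (f a.succ) (f i.succ) *
          orient (f 0) (f a.succ) (f (nextFin i).succ) < 0 then 1 else 0 := by
    intro a
    split_ifs with h
    · have hadd := leftCount_add_card hf a
      obtain ⟨i, hi⟩ : (Finset.univ.filter fun b : Fin n =>
        0 < orient (f 0) (f a.succ) (f b.succ)).Nonempty := Finset.card_pos.mp h.1
      obtain ⟨j, hj⟩ : (Finset.univ.filter fun b : Fin n =>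
        orient (f 0) (f a.succ) (f b.succ) < 0).Nonempty := Finset.card_pos.mp (by omega)
      simp only [Finset.mem_filter, Finset.mem_univ, true_and] at hi hj
      obtain ⟨k, hk⟩ := exists_sign_change a (fun b : Fin n => orient (f 0) (f a.succ) (f b.succ))
        (fun b hb => hf.orient_ne_zero (Fin.succ_ne_zero _).symm (Fin.succ_ne_zero _).symm
          (by simpa using Ne.symm hb))
        ⟨i, by rintro rfl; simp [orient_self_right] at hi, hi⟩
        ⟨j, by rintro rfl; simp [orient_self_right] at hj, hj⟩
      rw [← Finset.card_filter]
      exact Finset.card_pos.mpr ⟨k, by simpa using hk⟩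
    · exact Nat.zero_le _
  have hpt : ∀ a : Fin n, ((m * (m - 1) + 2 : ℤ) + (2 * m - 1) * (leftCount f a - m)) ≤
      ((leftCount f a * (leftCount f a - 1) : ℕ) : ℤ) +
        2 * (if 0 < leftCount f a ∧ leftCount f a < n - 1 then 1 else 0 : ℕ) := by
    intro a
    have hadd := leftCount_add_card hf a
    generalize leftCount f a = r at *
    rcases Nat.eq_zero_or_pos r with rfl | hr
    · simp
      nlinarith
    · obtain ⟨r, rfl⟩ : ∃ k, r = k + 1 := ⟨r - 1, by omega⟩
      split_ifs with h
      · push_cast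
        nlinarith [sq_nonneg ((r : ℤ) + 1 - m)]
      · obtain rfl : r = 2 * m - 1 := by omega
        obtain ⟨k, rfl⟩ : ∃ k, m = k + 1 := ⟨m - 1, by omega⟩
        have : 2 * (k + 1) - 1 = 2 * k + 1 := by omega
        rw [this]
        push_cast
        nlinarith
  have hleft : ∑ a, (leftCount f a : ℤ) = n * m := by
    have h := two_mul_sum_leftCount hf
    have : n - 1 = 2 * m := by omega
    rw [this] at h
    have : ∑ a, leftCount f a = n * m := by linarith
    exact_mod_cast this
  have hsum := Finset.sum_le_sum fun a (_ : a ∈ Finset.univ) => hpt a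
  simp only [Finset.sum_add_distrib, ← Finset.mul_sum, Finset.sum_sub_distrib, hleft,
    Finset.sum_const, Finset.card_univ, Fintype.card_fin, nsmul_eq_mul, sub_self,
    ← Nat.cast_sum] at hsum
  have hhub := Finset.sum_le_sum fun a (_ : a ∈ Finset.univ) => hcycle a
  have hstar := sum_leftCount_le_starSum hf
  have hcount := two_mul_drawingCrossings_wheelGraph (by omega) hf.1
  rw [← starSum] at hcount
  have hmm : ((m - 1 : ℕ) : ℤ) = m - 1 := by push_cast [show 1 ≤ m by omega]; ring
  have hall : ∑ a, leftCount f a * (leftCount f a - 1) +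
      2 * ∑ a, (if 0 < leftCount f a ∧ leftCount f a < n - 1 then 1 else 0) ≤
      2 * drawingCrossings (wheelGraph n) f := by
    rw [hcount]
    exact add_le_add (hstar.trans (Nat.le_add_right _ _)) (Nat.mul_le_mul_left 2 hhub)
  generalize ∑ a, leftCount f a * (leftCount f a - 1) = A at hsum hall
  generalize (∑ a, if 0 < leftCount f a ∧ leftCount f a < n - 1 then 1 else 0) = B at hsum hall
  refine le_trans ?_ hall
  zify
  rw [hmm]
  linarith

/-- The drawing of the wheel on a regular polygon with the hub at its center. -/
noncomputable def regularWheel (n : ℕ) : Fin (n + 1) → Pt :=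
  Fin.cons (0, 0) fun i : Fin n =>
    (Real.cos (2 * Real.pi * i / n), Real.sin (2 * Real.pi * i / n))

section RegularWheel

variable {n : ℕ}

theorem orient_regularWheel_hub (a b : Fin n) :
    orient (regularWheel n 0) (regularWheel n a.succ) (regularWheel n b.succ) =
      Real.sin (2 * Real.pi * b / n - 2 * Real.pi * a / n) := by
  simp only [orient, regularWheel, Fin.cons_zero, Fin.cons_succ, Real.sin_sub]
  ring

theorem sin_add_sin_sub_sin_add (x y : ℝ) :
    Real.sin (2 * x) + Real.sin (2 * y) - Real.sin (2 * (x + y)) =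
      4 * Real.sin x * Real.sin y * Real.sin (x + y) := by
  rw [Real.sin_two_mul (x + y), Real.sin_add, Real.cos_add, Real.sin_two_mul, Real.sin_two_mul]
  linear_combination (-2 * Real.sin x * Real.cos x) * Real.sin_sq_add_cos_sq y -
    (2 * Real.sin y * Real.cos y) * Real.sin_sq_add_cos_sq x

theorem orient_regularWheel_hub_pos {a b : Fin n} (hab : a < b)
    (h : 2 * b.val < n + 2 * a.val) :
    0 < orient (regularWheel n 0) (regularWheel n a.succ) (regularWheel n b.succ) := by
  rw [orient_regularWheel_hub, ← sub_div, ← mul_sub]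
  have hn : (0 : ℝ) < n := by exact_mod_cast a.pos
  have h1 : (a.val : ℝ) < b.val := by exact_mod_cast hab
  have h2 : (2 * b.val : ℝ) < n + 2 * a.val := by exact_mod_cast h
  have hpi := Real.pi_pos
  apply Real.sin_pos_of_pos_of_lt_pi
  · have := sub_pos.mpr h1
    positivity
  · rw [div_lt_iff₀ hn]
    nlinarith

theorem orient_regularWheel_hub_neg {a b : Fin n} (h : n + 2 * a.val < 2 * b.val) :
    orient (regularWheel n 0) (regularWheel n a.succ) (regularWheel n b.succ) < 0 := by
  rw [orient_regularWheel_hub, ← sub_div, ← mul_sub, ← Real.sin_sub_two_pi]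
  have hn : (0 : ℝ) < n := by exact_mod_cast a.pos
  have h1 : (b.val : ℝ) < n := by exact_mod_cast b.isLt
  have h0 : (0 : ℝ) ≤ a.val := Nat.cast_nonneg _
  have h2 : (n + 2 * a.val : ℝ) < 2 * b.val := by exact_mod_cast h
  have hpi := Real.pi_pos
  apply Real.sin_neg_of_neg_of_neg_pi_lt
  · rw [sub_neg, div_lt_iff₀ hn]
    nlinarith
  · rw [lt_sub_iff_add_lt, lt_div_iff₀ hn]
    nlinarith

theorem orient_regularWheel_hub_neg_iff (hodd : Odd n) (a b : Fin n) :
    orient (regularWheel n 0) (regularWheel n a.succ) (regularWheel n b.succ) < 0 ↔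
      n + 2 * a.val < 2 * b.val ∨ b.val < a.val ∧ 2 * a.val < n + 2 * b.val := by
  obtain ⟨m, hm⟩ := hodd
  constructor
  · intro hneg
    by_contra hcon
    rcases lt_trichotomy a.val b.val with h | h | h
    · exact hneg.not_gt (orient_regularWheel_hub_pos h (by omega))
    · obtain rfl := Fin.ext h
      simp [orient_self_right] at hneg
    · have := orient_regularWheel_hub_neg (a := b) (b := a) (by omega)
      rw [orient_swap_right] at this
      linarith
  · rintro (h | ⟨h, h'⟩)
    · exact orient_regularWheel_hub_neg h
    · rw [orient_swap_right, neg_lt_zero]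
      exact orient_regularWheel_hub_pos h h'

theorem orient_regularWheel_hub_pos_iff (hodd : Odd n) (a b : Fin n) :
    0 < orient (regularWheel n 0) (regularWheel n a.succ) (regularWheel n b.succ) ↔
      n + 2 * b.val < 2 * a.val ∨ a.val < b.val ∧ 2 * b.val < n + 2 * a.val := by
  rw [← orient_regularWheel_hub_neg_iff hodd, orient_swap_right, neg_pos]

theorem orient_regularWheel_rim_pos {a b c : Fin n} (hab : a < b) (hbc : b < c) :
    0 < orient (regularWheel n a.succ) (regularWheel n b.succ) (regularWheel n c.succ) := by
  have hn : (0 : ℝ) < n := by exact_mod_cast a.pos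
  have h1 : (a.val : ℝ) < b.val := by exact_mod_cast hab
  have h2 : (b.val : ℝ) < c.val := by exact_mod_cast hbc
  have h3 : (c.val : ℝ) < n := by exact_mod_cast c.isLt
  have h0 : (0 : ℝ) ≤ a.val := Nat.cast_nonneg _
  have hpi := Real.pi_pos
  have hsin : ∀ t : ℝ, 0 < t → t < n → 0 < Real.sin (Real.pi * t / n) := fun t ht htn => by
    apply Real.sin_pos_of_pos_of_lt_pi (by positivity)
    rw [div_lt_iff₀ hn]
    nlinarith
  have key := sin_add_sin_sub_sin_add (Real.pi * (b - a) / n) (Real.pi * (c - b) / n)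
  rw [orient_eq_add (regularWheel n 0), orient_swap_right _ (regularWheel n a.succ),
    orient_regularWheel_hub, orient_regularWheel_hub, orient_regularWheel_hub, ← sub_eq_add_neg]
  have e1 : 2 * Real.pi * b / n - 2 * Real.pi * a / n = 2 * (Real.pi * (b - a) / n) := by ring
  have e2 : 2 * Real.pi * c / n - 2 * Real.pi * b / n = 2 * (Real.pi * (c - b) / n) := by ring
  have e3 : 2 * Real.pi * c / n - 2 * Real.pi * a / n =
    2 * (Real.pi * (b - a) / n + Real.pi * (c - b) / n) := by ring
  have e4 : Real.pi * (b - a) / n + Real.pi * (c - b) / n = Real.pi * (c - a) / n := by ring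
  rw [e1, e2, e3, key, e4]
  have := hsin (b - a) (by linarith) (by linarith)
  have := hsin (c - b) (by linarith) (by linarith)
  have := hsin (c - a) (by linarith) (by linarith)
  positivity

theorem orient_regularWheel_rim_pos_of_cyclic {a b c : Fin n}
    (h : a.val < b.val ∧ b.val < c.val ∨ b.val < c.val ∧ c.val < a.val ∨
      c.val < a.val ∧ a.val < b.val) :
    0 < orient (regularWheel n a.succ) (regularWheel n b.succ) (regularWheel n c.succ) := by
  rcases h with ⟨h, h'⟩ | ⟨h, h'⟩ | ⟨h, h'⟩
  · exact orient_regularWheel_rim_pos h h'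
  · rw [← orient_rotate]; exact orient_regularWheel_rim_pos h h'
  · rw [orient_rotate (regularWheel n c.succ)]; exact orient_regularWheel_rim_pos h h'

theorem orient_regularWheel_rim_neg_iff (a b c : Fin n) :
    orient (regularWheel n a.succ) (regularWheel n b.succ) (regularWheel n c.succ) < 0 ↔
      a.val < c.val ∧ c.val < b.val ∨ c.val < b.val ∧ b.val < a.val ∨
      b.val < a.val ∧ a.val < c.val := by
  constructor
  · intro hneg
    by_contra hcon
    have hab : a.val ≠ b.val := fun h => by
      obtain rfl := Fin.ext h; simp [orient_self_left] at hneg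
    have hac : a.val ≠ c.val := fun h => by
      obtain rfl := Fin.ext h; simp [orient_self_outer] at hneg
    have hbc : b.val ≠ c.val := fun h => by
      obtain rfl := Fin.ext h; simp [orient_self_right] at hneg
    exact hneg.not_gt (orient_regularWheel_rim_pos_of_cyclic (by omega))
  · intro h
    rw [orient_swap_right, neg_lt_zero]
    exact orient_regularWheel_rim_pos_of_cyclic h

theorem orient_regularWheel_rim_pos_iff (a b c : Fin n) :
    0 < orient (regularWheel n a.succ) (regularWheel n b.succ) (regularWheel n c.succ) ↔
      a.val < b.val ∧ b.val < c.val ∨ b.val < c.val ∧ c.val < a.val ∨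
      c.val < a.val ∧ a.val < b.val := by
  rw [← orient_regularWheel_rim_neg_iff a c b, orient_swap_right, neg_pos]

theorem isRectDrawing_regularWheel (hn : 2 ≤ n) (hodd : Odd n) :
    IsRectDrawing (regularWheel n) := by
  have hhub : ∀ a b : Fin n, a ≠ b →
      orient (regularWheel n 0) (regularWheel n a.succ) (regularWheel n b.succ) ≠ 0 := by
    intro a b hab
    rw [← lt_or_lt_iff_ne, orient_regularWheel_hub_neg_iff hodd,
      orient_regularWheel_hub_pos_iff hodd]
    obtain ⟨m, hm⟩ := hodd
    have : a.val ≠ b.val := fun h => hab (Fin.ext h)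
    omega
  refine isRectDrawing_of_orient_ne_zero (by simp; omega) ?_
  intro a b c
  cases a using Fin.cases with
  | zero =>
    cases b using Fin.cases with
    | zero => exact fun h => absurd rfl h
    | succ b =>
      cases c using Fin.cases with
      | zero => exact fun _ h => absurd rfl h
      | succ c => exact fun _ _ h => hhub b c (by simpa using h)
  | succ a =>
    cases b using Fin.cases with
    | zero =>
      cases c using Fin.cases with
      | zero => exact fun _ _ h => absurd rfl h
      | succ c =>
        intro _ h _
        rw [orient_swap, neg_ne_zero]
        exact hhub a c (by simpa using h)
    | succ b =>
      cases c using Fin.cases with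
      | zero =>
        intro h _ _
        rw [orient_rotate (regularWheel n 0)]
        exact hhub a b (by simpa using h)
      | succ c =>
        intro hab hac hbc
        rw [← lt_or_lt_iff_ne, orient_regularWheel_rim_neg_iff, orient_regularWheel_rim_pos_iff]
        simp only [ne_eq, Fin.ext_iff, Fin.val_succ] at hab hac hbc
        omega

theorem leftCount_regularWheel_le {m : ℕ} (hm : n = 2 * m + 1) (a : Fin n) :
    leftCount (regularWheel n) a ≤ m := by
  rw [leftCount, ← Finset.card_range m]
  refine Finset.card_le_card_of_injOn
    (fun b => if a.val < b.val then b.val - a.val - 1 else b.val + n - a.val - 1) ?_ ?_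
  · intro b hb
    simp only [Finset.coe_filter, Finset.mem_univ, true_and, Set.mem_ofPred_eq,
      orient_regularWheel_hub_pos_iff ⟨m, hm⟩] at hb
    simp only [Finset.coe_range, Set.mem_Iio]
    split_ifs <;> omega
  · intro b _ c _ hbc
    simp only at hbc
    apply Fin.ext
    split_ifs at hbc <;> omega

theorem two_mul_drawingCrossings_regularWheel_le {m : ℕ} (hm : 1 ≤ m) (hn : n = 2 * m + 1) :
    2 * drawingCrossings (wheelGraph n) (regularWheel n) ≤ n * (m * (m - 1) + 2) := by
  have hodd : Odd n := ⟨m, hn⟩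
  have hf := isRectDrawing_regularWheel (by omega) hodd
  rw [two_mul_drawingCrossings_wheelGraph (by omega) hf.1, ← starSum]
  have hstar : starSum (regularWheel n) ≤ n * (m * (m - 1)) := by
    refine (starSum_le_sum_leftCount hf fun a b c => ?_).trans ?_
    · simp only [mul_neg_iff, orient_regularWheel_hub_pos_iff hodd,
        orient_regularWheel_hub_neg_iff hodd, orient_regularWheel_rim_pos_iff,
        orient_regularWheel_rim_neg_iff]
      omega
    · refine (Finset.sum_le_card_nsmul _ _ (m * (m - 1)) fun a _ => ?_).trans (by simp)
      have := leftCount_regularWheel_le hn a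
      exact Nat.mul_le_mul this (by omega)
  have hrim : ∀ i a b : Fin n, ¬
      orient (regularWheel n a.succ) (regularWheel n b.succ) (regularWheel n i.succ) *
      orient (regularWheel n a.succ) (regularWheel n b.succ)
        (regularWheel n (nextFin i).succ) < 0 := by
    intro i a b
    have := nextFin_val i
    simp only [mul_neg_iff, orient_regularWheel_rim_pos_iff, orient_regularWheel_rim_neg_iff]
    omega
  have hhub : ∀ a : Fin n, (∑ i : Fin n,
      if orient (regularWheel n 0) (regularWheel n a.succ) (regularWheel n i.succ) *
        orient (regularWheel n 0) (regularWheel n a.succ) (regularWheel n (nextFin i).succ) < 0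
      then 1 else 0) ≤ 1 := by
    intro a
    rw [← Finset.card_filter, Finset.card_le_one]
    intro i hi j hj
    have := nextFin_val i
    have := nextFin_val j
    simp only [Finset.mem_filter, Finset.mem_univ, true_and, mul_neg_iff,
      orient_regularWheel_hub_pos_iff hodd, orient_regularWheel_hub_neg_iff hodd] at hi hj
    apply Fin.ext
    omega
  have hhubs := Finset.sum_le_sum fun a (_ : a ∈ Finset.univ) => hhub a
  simp only [Finset.sum_const, Finset.card_univ, Fintype.card_fin, smul_eq_mul, mul_one] at hhubs
  simp only [hrim, if_false, Finset.sum_const_zero, add_zero, mul_add]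
  linarith

end RegularWheel

/-- For odd n ≥ 5, `OCN(W_{n,1}) = n(n² - 4n + 11)/8`. -/
theorem stmt_7 (n : ℕ) (hn : 5 ≤ n) (hodd : Odd n) :
    OCN (wheelGraph n) = n * (n ^ 2 - 4 * n + 11) / 8 := by
  obtain ⟨m, hm⟩ := hodd
  have hm2 : 2 ≤ m := by omega
  have hf := isRectDrawing_regularWheel (by omega) ⟨m, hm⟩
  have hupper := two_mul_drawingCrossings_regularWheel_le (by omega) hm
  have hlower : n * (m * (m - 1) + 2) ≤ 2 * OCN (wheelGraph n) := by
    obtain ⟨g, hg, hgv⟩ := Nat.sInf_mem (s := {k | ∃ f : Fin (n + 1) → Pt,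
      IsRectDrawing f ∧ drawingCrossings (wheelGraph n) f = k}) ⟨_, _, hf, rfl⟩
    rw [OCN, ← hgv]
    exact le_two_mul_drawingCrossings hm2 hm hg
  have hle : OCN (wheelGraph n) ≤ drawingCrossings (wheelGraph n) (regularWheel n) :=
    Nat.sInf_le ⟨_, hf, rfl⟩
  have heq : n * (m * (m - 1) + 2) = 2 * OCN (wheelGraph n) := by omega
  have hsq : n ^ 2 - 4 * n + 11 = 4 * (m * (m - 1) + 2) := by
    obtain ⟨k, rfl⟩ : ∃ k, m = k + 2 := ⟨m - 2, by omega⟩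
    have h1 : n ^ 2 = 4 * n + (4 * k ^ 2 + 12 * k + 5) := by rw [hm]; ring
    have h2 : k + 2 - 1 = k + 1 := rfl
    rw [h1, h2, Nat.add_sub_cancel_left]
    ring
  rw [hsq, Nat.mul_left_comm, heq]
  omega
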